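/- (Proposition 1: associative recall via convolution, without positional encoding.) Let V be a vocabulary (a type), d a positive natural number, and e : V → EuclideanSpace ℝ (Fin d) a family of token embeddings that is orthonormal: ⟪e u, e v⟫ = 1 if u = v and 0 otherwise. Let t : ℕ → V be a token sequence, N ≥ 1, and a, b ∈ V with a ≠ b, such that every occurrence of a before position N is immediately followed by b (for all i < N, t i = a implies t (i+1) = b) and there exists i < N with t i = a. Define the convolution-processed attention scores s_j = ⟪e a, e (t (j-1))⟫ - ⟪e a, e (t j)⟫ for 1 ≤ j ≤ N, and for β > 0 the softmax attention output o(β) = Σ_{j=1}^{N} [exp(β · s_j) / Σ_{m=1}^{N} exp(β · s_m)] • e (t j). Then o(β) converges to e b as β → ∞. -/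

import Mathlib

open scoped InnerProductSpace

/-! Strictly dominated softmax weights decay exponentially in the inverse temperature `β`, while
the weights always sum to one. Hence a softmax average converges to `x` as soon as every index
carrying a value other than `x` scores strictly below a fixed one. For associative recall,
the score at `j` is the drop in similarity to the query from token `j - 1` to token `j`; it is
largest right after an occurrence of `a`, where the token is always `b`. -/

open Filter Topology

section Softmax

variable {ι : Type*} {S : Finset ι} {s : ι → ℝ} {i j : ι}

/-- The softmax (Gibbs) weight of the index `j` among the indices `S`, for the scores `s` at
inverse temperature `β`. -/
noncomputable def softmax (S : Finset ι) (s : ι → ℝ) (β : ℝ) (j : ι) : ℝ :=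
  Real.exp (β * s j) / ∑ m ∈ S, Real.exp (β * s m)

theorem softmax_nonneg (S : Finset ι) (s : ι → ℝ) (β : ℝ) (j : ι) : 0 ≤ softmax S s β j := by
  unfold softmax
  positivity

theorem sum_softmax_eq_one (hS : S.Nonempty) (s : ι → ℝ) (β : ℝ) :
    ∑ j ∈ S, softmax S s β j = 1 := by
  have hpos : 0 < ∑ m ∈ S, Real.exp (β * s m) := Finset.sum_pos (fun _ _ => Real.exp_pos _) hS
  simp only [softmax]
  rw [← Finset.sum_div, div_self hpos.ne']

theorem softmax_le_exp_mul_sub (hi : i ∈ S) (s : ι → ℝ) (β : ℝ) (j : ι) :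
    softmax S s β j ≤ Real.exp (β * (s j - s i)) := by
  have hle : Real.exp (β * s i) ≤ ∑ m ∈ S, Real.exp (β * s m) :=
    Finset.single_le_sum (f := fun m => Real.exp (β * s m)) (fun _ _ => (Real.exp_pos _).le) hi
  calc softmax S s β j ≤ Real.exp (β * s j) / Real.exp (β * s i) :=
        div_le_div_of_nonneg_left (Real.exp_pos _).le (Real.exp_pos _) hle
    _ = Real.exp (β * (s j - s i)) := by rw [← Real.exp_sub, mul_sub]

theorem tendsto_softmax_zero_of_lt (hi : i ∈ S) (hlt : s j < s i) :
    Tendsto (fun β => softmax S s β j) atTop (𝓝 0) := by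
  have hexp : Tendsto (fun β : ℝ => Real.exp (β * (s j - s i))) atTop (𝓝 0) :=
    Real.tendsto_exp_atBot.comp (tendsto_id.atTop_mul_const_of_neg (sub_neg.2 hlt))
  exact squeeze_zero (fun β => softmax_nonneg S s β j)
    (fun β => softmax_le_exp_mul_sub hi s β j) hexp

section Average

variable {F : Type*} [AddCommGroup F] [Module ℝ F]

theorem sum_softmax_smul_eq_add (hS : S.Nonempty) (s : ι → ℝ) (β : ℝ) (v : ι → F) (x : F) :
    ∑ j ∈ S, softmax S s β j • v j = x + ∑ j ∈ S, softmax S s β j • (v j - x) := by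
  simp only [smul_sub, Finset.sum_sub_distrib]
  rw [← Finset.sum_smul, sum_softmax_eq_one hS, one_smul, add_sub_cancel]

theorem tendsto_sum_softmax_smul [TopologicalSpace F] [ContinuousAdd F] [ContinuousSMul ℝ F]
    {v : ι → F} {x : F} (hi : i ∈ S) (hlt : ∀ j ∈ S, v j ≠ x → s j < s i) :
    Tendsto (fun β => ∑ j ∈ S, softmax S s β j • v j) atTop (𝓝 x) := by
  have hterm : ∀ j ∈ S, Tendsto (fun β => softmax S s β j • (v j - x)) atTop (𝓝 0) := by
    intro j hj
    rcases eq_or_ne (v j) x with hv | hv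
    · simpa [hv] using tendsto_const_nhds
    · simpa using (tendsto_softmax_zero_of_lt hi (hlt j hj hv)).smul_const (v j - x)
  simp only [sum_softmax_smul_eq_add ⟨i, hi⟩ s _ v x]
  simpa using (tendsto_finsetSum S hterm).const_add x

end Average

end Softmax

theorem inner_sub_inner_lt_of_orthonormal {V E : Type*} [NormedAddCommGroup E]
    [InnerProductSpace ℝ E] {e : V → E} (he : Orthonormal ℝ e) {a b u : V} (hab : a ≠ b)
    (hu : u ≠ a) (w : V) : ⟪e a, e u⟫_ℝ - ⟪e a, e w⟫_ℝ < ⟪e a, e a⟫_ℝ - ⟪e a, e b⟫_ℝ := by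
  classical
  have hw : 0 ≤ ⟪e a, e w⟫_ℝ := by
    rw [orthonormal_iff_ite.1 he]
    positivity
  rw [he.inner_eq_zero hu.symm, he.inner_eq_zero hab,
    inner_self_eq_one_of_norm_eq_one (he.norm_eq_one a)]
  linarith

/-- For `q v = ⟪e a, e v⟫_ℝ` with unit vectors `e v`, the gap condition `hgap` tolerates small inner
products between distinct tokens, which are unavoidable once the vocabulary exceeds the dimension. -/
theorem associative_recall_via_convolution_general {V F : Type*}
    [AddCommGroup F] [Module ℝ F] [TopologicalSpace F] [ContinuousAdd F] [ContinuousSMul ℝ F]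
    (q : V → ℝ) (v : V → F) {t : ℕ → V} {N : ℕ} {a b : V}
    (hgap : ∀ u ≠ a, ∀ w, q u - q w < q a - q b)
    (hfollow : ∀ i < N, t i = a → t (i + 1) = b) (hocc : ∃ i < N, t i = a)
    {s : ℕ → ℝ} (hs : ∀ j, 1 ≤ j → j ≤ N → s j = q (t (j - 1)) - q (t j)) :
    Tendsto (fun β => ∑ j ∈ Finset.Icc 1 N, softmax (Finset.Icc 1 N) s β j • v (t j))
      atTop (𝓝 (v b)) := by
  obtain ⟨i, hi, hia⟩ := hocc
  have hmax : s (i + 1) = q a - q b := by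
    rw [hs (i + 1) i.succ_pos hi, Nat.add_sub_cancel, hia, hfollow i hi hia]
  refine tendsto_sum_softmax_smul (Finset.mem_Icc.2 ⟨i.succ_pos, hi⟩) fun j hj hne => ?_
  obtain ⟨hj1, hjN⟩ := Finset.mem_Icc.1 hj
  have hprev : t (j - 1) ≠ a := fun h =>
    hne (by rw [← hfollow (j - 1) (by omega) h, Nat.sub_add_cancel hj1])
  rw [hs j hj1 hjN, hmax]
  exact hgap _ hprev _

/-- Proposition 1 (associative recall via convolution, without positional encoding):
the softmax attention output over the convolution-processed scores converges to the
embedding of the token `b` that always follows `a`, as the inverse temperature `β → ∞`. -/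
theorem associative_recall_via_convolution
    (V : Type*) [DecidableEq V] (d : ℕ) (hd : 0 < d)
    (e : V → EuclideanSpace ℝ (Fin d))
    (he : ∀ u v : V, ⟪e u, e v⟫_ℝ = if u = v then 1 else 0)
    (t : ℕ → V) (N : ℕ) (hN : 1 ≤ N) (a b : V) (hab : a ≠ b)
    (hfollow : ∀ i : ℕ, i < N → t i = a → t (i + 1) = b)
    (hocc : ∃ i : ℕ, i < N ∧ t i = a)
    (s : ℕ → ℝ)
    (hs : ∀ j : ℕ, 1 ≤ j → j ≤ N →
      s j = ⟪e a, e (t (j - 1))⟫_ℝ - ⟪e a, e (t j)⟫_ℝ)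
    (o : ℝ → EuclideanSpace ℝ (Fin d))
    (ho : ∀ β : ℝ, o β = ∑ j ∈ Finset.Icc 1 N,
      (Real.exp (β * s j) / ∑ m ∈ Finset.Icc 1 N, Real.exp (β * s m)) • e (t j)) :
    Filter.Tendsto o Filter.atTop (nhds (e b)) := by
  rw [funext ho]
  exact associative_recall_via_convolution_general (fun v => ⟪e a, e v⟫_ℝ) e
    (fun _ => inner_sub_inner_lt_of_orthonormal (orthonormal_iff_ite.2 he) hab) hfollow hocc hs
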